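/- arXiv:1510.09127 — 2 statements merged into one kernel-verified Lean document; each statement's English description precedes it below -/
import Mathlib

section
/- Let M be a positive natural number, T > 0, N ∈ ℕ, and let η : [0,T] → ℝ^M satisfy η(t_k) ∈ Σ_r^M for every sample time t_k = kT/2^N, k ∈ {0,…,2^N−1}. Then for every k ∈ {0,…,2^N−1} and every i ∈ {1,…,M}, ∫_{kT/2^N}^{(k+1)T/2^N} [P_N(η)]_i(t) dt = (T/2^N) · η_i(t_k). -/
/-- Partial sums `S_{k,i} = (T/2^N) (k + ∑_{j=1}^{i} η_j(kT/2^N))` used in the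
pulse-width modulation operator (here `i : ℕ` counts how many coordinates are summed,
coordinates being indexed by `Fin M`). -/
noncomputable def pwmPartial (M : ℕ) (T : ℝ) (N : ℕ) (η : ℝ → Fin M → ℝ)
    (k i : ℕ) : ℝ :=
  (T / 2 ^ N) *
    (k + ∑ j ∈ Finset.univ.filter (fun j : Fin M => (j : ℕ) < i), η (k * T / 2 ^ N) j)

/-- The pulse-width modulation operator: `[P_N(η)]_i(t) = 1` iff
`t ∈ [S_{k,i-1}, S_{k,i})` for some `k ∈ {0,…,2^N-1}` (with `i : Fin M` zero-based,
so the pulse for coordinate `i` is `[S_{k,i}, S_{k,i+1})` in zero-based partial sums). -/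
noncomputable def pwm (M : ℕ) (T : ℝ) (N : ℕ) (η : ℝ → Fin M → ℝ)
    (t : ℝ) (i : Fin M) : ℝ :=
  if ∃ k : ℕ, k < 2 ^ N ∧
      t ∈ Set.Ico (pwmPartial M T N η k i) (pwmPartial M T N η k (i + 1)) then 1 else 0

/-!
The simplex condition confines the `k`-th pulse of every coordinate to the `k`-th cell
`[kT/2^N, (k+1)T/2^N)`, and distinct cells are disjoint. On the `k`-th cell `[P_N(η)]_i` is
therefore the indicator of the `k`-th pulse alone, and its integral is the length of that pulse,
`S_{k,i} - S_{k,i-1} = (T/2^N) η_i(t_k)`.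
-/

open MeasureTheory Set

/-- The `k`-th sampling period of the modulation, taken half-open on the right like the pulses, so
that pulses are contained in cells and distinct cells are disjoint. -/
def pwmCell (T : ℝ) (N k : ℕ) : Set ℝ :=
  Ico (k * T / 2 ^ N) ((k + 1) * T / 2 ^ N)

/-- The `k`-th pulse of coordinate `i`, i.e. the interval `[S_{k,i-1}, S_{k,i})` in the one-based
indexing of coordinates. -/
def pwmPulse (M : ℕ) (T : ℝ) (N : ℕ) (η : ℝ → Fin M → ℝ) (k : ℕ) (i : Fin M) : Set ℝ :=
  Ico (pwmPartial M T N η k i) (pwmPartial M T N η k (i + 1))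

lemma pairwise_disjoint_pwmCell {T : ℝ} (hT : 0 ≤ T) (N : ℕ) :
    Pairwise (Function.onFun Disjoint (pwmCell T N)) := by
  have sampleTime_mono : Monotone fun k : ℕ ↦ (k : ℝ) * T / 2 ^ N := fun _ _ _ ↦ by
    dsimp only
    gcongr
  unfold pwmCell
  simpa only [Nat.succ_eq_succ, Nat.cast_succ] using sampleTime_mono.pairwise_disjoint_on_Ico_succ

section Pulse

variable {M : ℕ} {T : ℝ} {N : ℕ} {η : ℝ → Fin M → ℝ} {k : ℕ}

lemma pwmPartial_succ (i : Fin M) :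
    pwmPartial M T N η k (i + 1) =
      pwmPartial M T N η k i + T / 2 ^ N * η (k * T / 2 ^ N) i := by
  have filter_lt_succ : Finset.univ.filter (fun j : Fin M ↦ (j : ℕ) < i + 1) =
      insert i (Finset.univ.filter fun j : Fin M ↦ (j : ℕ) < i) := by
    ext j
    simp only [Finset.mem_filter_univ, Finset.mem_insert, Fin.ext_iff]
    lia
  rw [pwmPartial, pwmPartial, filter_lt_succ, Finset.sum_insert (by simp)]
  ring

lemma le_pwmPartial (hT : 0 ≤ T) (hη : 0 ≤ η (k * T / 2 ^ N)) (i : ℕ) :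
    k * T / 2 ^ N ≤ pwmPartial M T N η k i := by
  calc k * T / 2 ^ N = T / 2 ^ N * k := by ring
    _ ≤ pwmPartial M T N η k i := by
      rw [pwmPartial]
      gcongr
      exact le_add_of_nonneg_right (Finset.sum_nonneg fun j _ ↦ hη j)

lemma pwmPartial_le (hT : 0 ≤ T) (hη : 0 ≤ η (k * T / 2 ^ N))
    (hsum : ∑ j, η (k * T / 2 ^ N) j ≤ 1) (i : ℕ) :
    pwmPartial M T N η k i ≤ (k + 1) * T / 2 ^ N := by
  calc pwmPartial M T N η k i ≤ T / 2 ^ N * (k + 1) := by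
        rw [pwmPartial]
        gcongr
        exact (Finset.sum_le_univ_sum_of_nonneg hη).trans hsum
    _ = (k + 1) * T / 2 ^ N := by ring

lemma pwmPulse_subset_pwmCell (hT : 0 ≤ T) (hη : 0 ≤ η (k * T / 2 ^ N))
    (hsum : ∑ j, η (k * T / 2 ^ N) j ≤ 1) (i : Fin M) :
    pwmPulse M T N η k i ⊆ pwmCell T N k :=
  Ico_subset_Ico (le_pwmPartial hT hη i) (pwmPartial_le hT hη hsum (i + 1))

lemma measurableSet_pwmPulse (i : Fin M) : MeasurableSet (pwmPulse M T N η k i) :=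
  measurableSet_Ico

lemma volume_real_pwmPulse (hT : 0 ≤ T) {i : Fin M} (hη : 0 ≤ η (k * T / 2 ^ N) i) :
    volume.real (pwmPulse M T N η k i) = T / 2 ^ N * η (k * T / 2 ^ N) i := by
  have width_nonneg : 0 ≤ T / 2 ^ N * η (k * T / 2 ^ N) i := by positivity
  rw [pwmPulse, pwmPartial_succ, Real.volume_real_Ico_of_le (le_add_of_nonneg_right width_nonneg),
    add_sub_cancel_left]

lemma eqOn_pwm_indicator_pwmPulse (hT : 0 ≤ T) (hη : ∀ k : ℕ, k < 2 ^ N → 0 ≤ η (k * T / 2 ^ N))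
    (hsum : ∀ k : ℕ, k < 2 ^ N → ∑ j, η (k * T / 2 ^ N) j ≤ 1) (hk : k < 2 ^ N) (i : Fin M) :
    EqOn (fun t ↦ pwm M T N η t i) ((pwmPulse M T N η k i).indicator 1) (pwmCell T N k) := by
  intro t t_mem_cell
  classical
  simp only [pwm, indicator_apply, Pi.one_apply]
  refine if_congr ⟨?_, fun t_mem_pulse ↦ ⟨k, hk, t_mem_pulse⟩⟩ rfl rfl
  rintro ⟨l, hl, t_mem_pulse⟩
  have t_mem_cell' : t ∈ pwmCell T N l :=
    pwmPulse_subset_pwmCell hT (hη l hl) (hsum l hl) i t_mem_pulse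
  obtain rfl : l = k := (pairwise_disjoint_pwmCell hT N).eq
    (not_disjoint_iff.mpr ⟨t, t_mem_cell', t_mem_cell⟩)
  exact t_mem_pulse

end Pulse

theorem stmt6_general {M : ℕ} {T : ℝ} (hT : 0 ≤ T) {N : ℕ} {η : ℝ → Fin M → ℝ}
    (hη : ∀ k : ℕ, k < 2 ^ N → 0 ≤ η (k * T / 2 ^ N))
    (hsum : ∀ k : ℕ, k < 2 ^ N → ∑ j, η (k * T / 2 ^ N) j ≤ 1)
    {k : ℕ} (hk : k < 2 ^ N) (i : Fin M) :
    ∫ t in (k * T / 2 ^ N)..((k + 1) * T / 2 ^ N), pwm M T N η t i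
      = T / 2 ^ N * η (k * T / 2 ^ N) i := by
  have cell_le : k * T / 2 ^ N ≤ (k + 1) * T / 2 ^ N := by
    gcongr
    exact le_add_of_nonneg_right zero_le_one
  calc ∫ t in (k * T / 2 ^ N)..((k + 1) * T / 2 ^ N), pwm M T N η t i
      = ∫ t in pwmCell T N k, pwm M T N η t i := by
        rw [intervalIntegral.integral_of_le cell_le, ← integral_Ico_eq_integral_Ioc, pwmCell]
    _ = ∫ t in pwmCell T N k, (pwmPulse M T N η k i).indicator 1 t :=
        setIntegral_congr_fun measurableSet_Ico (eqOn_pwm_indicator_pwmPulse hT hη hsum hk i)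
    _ = volume.real (pwmPulse M T N η k i) := by
        rw [integral_indicator_one (measurableSet_pwmPulse i),
          measureReal_restrict_apply (measurableSet_pwmPulse i),
          inter_eq_left.mpr (pwmPulse_subset_pwmCell hT (hη k hk) (hsum k hk) i)]
    _ = T / 2 ^ N * η (k * T / 2 ^ N) i := volume_real_pwmPulse hT (hη k hk i)

/-- The averaging property of pulse-width modulation: if `η` takes values
in the simplex `Σ_r^M` at every sample time `kT/2^N`, then on each dyadic subinterval
`[kT/2^N, (k+1)T/2^N]` the time integral of `[P_N(η)]_i` equals `(T/2^N) η_i(kT/2^N)`. -/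
theorem stmt6 (M : ℕ) (hM : 0 < M) (T : ℝ) (hT : 0 < T) (N : ℕ)
    (η : ℝ → Fin M → ℝ)
    (hη : ∀ k : ℕ, k < 2 ^ N →
      ∑ i, η (k * T / 2 ^ N) i = 1 ∧ ∀ i, η (k * T / 2 ^ N) i ∈ Set.Icc (0:ℝ) 1) :
    ∀ k : ℕ, k < 2 ^ N → ∀ i : Fin M,
      ∫ t in (k * T / 2 ^ N)..((k + 1) * T / 2 ^ N), pwm M T N η t i
        = (T / 2 ^ N) * η (k * T / 2 ^ N) i :=
  fun _ hk i ↦ stmt6_general hT.le (fun l hl j ↦ ((hη l hl).2 j).1) (fun l hl ↦ (hη l hl).1.le) hk i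
end

section
/- Let M be a positive natural number, T > 0, N ∈ ℕ, and let ω : [0,T] → ℝ^M be integrable with ω(t) ∈ Σ_r^M for almost every t ∈ [0,T]. Then F_N(ω)(t) ∈ Σ_r^M for almost every t ∈ [0,T], where F_N acts coordinatewise. -/
open MeasureTheory

/-- The mother Haar function on `[0,T]`: `1` on `[0,T/2)`, `-1` on `[T/2,T)`, `0` otherwise. -/
noncomputable def haarMother (T t : ℝ) : ℝ :=
  if 0 ≤ t ∧ t < T / 2 then 1 else if T / 2 ≤ t ∧ t < T then -1 else 0

/-- The Haar function `b_{k,j}(t) = b_{0,0}(2^k t - j T)` on `[0,T]`. -/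
noncomputable def haarFn (T : ℝ) (k j : ℕ) (t : ℝ) : ℝ :=
  haarMother T (2 ^ k * t - j * T)

/-- The Haar wavelet operator
`F_N(g)(t) = (1/T) ∫₀ᵀ g + ∑_{k=0}^{N} ∑_{j=0}^{2^k-1} (2^k/T) (∫₀ᵀ g b_{k,j}) b_{k,j}(t)`. -/
noncomputable def haarOp (T : ℝ) (N : ℕ) (g : ℝ → ℝ) (t : ℝ) : ℝ :=
  (1 / T) * (∫ s in (0:ℝ)..T, g s) +
    ∑ k ∈ Finset.range (N + 1), ∑ j ∈ Finset.range (2 ^ k),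
      (2 ^ k / T) * (∫ s in (0:ℝ)..T, g s * haarFn T k j s) * haarFn T k j t

/-!
On a dyadic cell of level `n` the Haar partial sum over the levels `k < n` equals the mean of `g`
over that cell: at each level a single Haar function is nonzero at a given point, and adding its
term replaces the mean over a cell by the mean over the half containing the point. The mean of a
function with values in a closed convex set lies in that set, and the simplex is closed and convex.
-/

/-- The `m`-th half-open dyadic subinterval of level `n` of `[0, T)`, which has length `T / 2 ^ n`.
For `m < 2 ^ n` these partition `[0, T)`; larger indices give cells beyond `T`. -/
def dyadicCell (T : ℝ) (n m : ℕ) : Set ℝ :=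
  Set.Ico (m * T / 2 ^ n) ((m + 1) * T / 2 ^ n)

/-- The Haar expansion of `g` over the levels `k < n`. The index is shifted by one relative to
`haarOp`, so that `n = 0` is the mean over `[0, T]`. -/
noncomputable def haarPartialSum (T : ℝ) (n : ℕ) (g : ℝ → ℝ) (t : ℝ) : ℝ :=
  (1 / T) * (∫ s in (0:ℝ)..T, g s) +
    ∑ k ∈ Finset.range n, ∑ j ∈ Finset.range (2 ^ k),
      (2 ^ k / T) * (∫ s in (0:ℝ)..T, g s * haarFn T k j s) * haarFn T k j t

section DyadicCell

variable {T : ℝ}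

lemma dyadicCell_zero_zero (T : ℝ) : dyadicCell T 0 0 = Set.Ico 0 T := by
  simp [dyadicCell]

lemma measurableSet_dyadicCell (T : ℝ) (n m : ℕ) : MeasurableSet (dyadicCell T n m) :=
  measurableSet_Ico

lemma volume_dyadicCell (T : ℝ) (n m : ℕ) :
    volume (dyadicCell T n m) = ENNReal.ofReal (T / 2 ^ n) := by
  rw [dyadicCell, Real.volume_Ico]
  ring_nf

lemma pairwise_disjoint_dyadicCell (hT : 0 ≤ T) (n : ℕ) :
    Pairwise (Function.onFun Disjoint (dyadicCell T n)) := by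
  have endpoint_mono : Monotone fun m : ℕ => (m * T / 2 ^ n : ℝ) := fun a b hab => by
    dsimp only
    gcongr
  simpa [dyadicCell, Function.onFun, Pairwise] using endpoint_mono.pairwise_disjoint_on_Ico_succ

lemma dyadicCell_two_mul (T : ℝ) (n j : ℕ) :
    dyadicCell T (n + 1) (2 * j) =
      Set.Ico (j * T / 2 ^ n) ((2 * j + 1) * T / 2 ^ (n + 1)) := by
  have left_endpoint : (2 * j * T / 2 ^ (n + 1) : ℝ) = j * T / 2 ^ n := by field_simp; ring
  simp [dyadicCell, left_endpoint]

lemma dyadicCell_two_mul_add_one (T : ℝ) (n j : ℕ) :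
    dyadicCell T (n + 1) (2 * j + 1) =
      Set.Ico ((2 * j + 1) * T / 2 ^ (n + 1)) ((j + 1) * T / 2 ^ n) := by
  have right_endpoint : ((2 * j + 1 + 1) * T / 2 ^ (n + 1) : ℝ) = (j + 1) * T / 2 ^ n := by
    field_simp; ring
  simp [dyadicCell, right_endpoint]

lemma dyadicCell_two_mul_union (hT : 0 ≤ T) (n j : ℕ) :
    dyadicCell T (n + 1) (2 * j) ∪ dyadicCell T (n + 1) (2 * j + 1) = dyadicCell T n j := by
  have midpoint_eq : ((2 * j + 1) * T / 2 ^ (n + 1) : ℝ) = (j + 1 / 2) * T / 2 ^ n := by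
    field_simp; ring
  rw [dyadicCell_two_mul, dyadicCell_two_mul_add_one, dyadicCell, midpoint_eq]
  apply Set.Ico_union_Ico_eq_Ico <;> gcongr <;> norm_num

lemma dyadicCell_subset_Ico (hT : 0 ≤ T) {n m : ℕ} (hm : m < 2 ^ n) :
    dyadicCell T n m ⊆ Set.Ico 0 T := by
  have succ_le : (m + 1 : ℝ) ≤ 2 ^ n := by exact_mod_cast hm
  refine Set.Ico_subset_Ico (by positivity) ?_
  rw [div_le_iff₀ (by positivity), mul_comm T]
  gcongr

lemma exists_mem_dyadicCell {t : ℝ} (ht : t ∈ Set.Ico 0 T) (n : ℕ) :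
    ∃ m < 2 ^ n, t ∈ dyadicCell T n m := by
  have hT : 0 ≤ T := ht.1.trans ht.2.le
  induction n with
  | zero => exact ⟨0, by simp, by rwa [dyadicCell_zero_zero]⟩
  | succ n ih =>
    obtain ⟨j, hj, htj⟩ := ih
    rw [← dyadicCell_two_mul_union hT] at htj
    rcases htj with left | right
    · exact ⟨2 * j, by omega, left⟩
    · exact ⟨2 * j + 1, by omega, right⟩

lemma setAverage_dyadicCell (hT : 0 ≤ T) (n m : ℕ) (g : ℝ → ℝ) :
    ⨍ s in dyadicCell T n m, g s = 2 ^ n / T * ∫ s in dyadicCell T n m, g s := by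
  rw [setAverage_eq, measureReal_def, volume_dyadicCell,
    ENNReal.toReal_ofReal (by positivity), inv_div, smul_eq_mul]

end DyadicCell

section HaarFn

variable {T : ℝ} {n j : ℕ} {t : ℝ}

lemma haarFn_of_mem_left (ht : t ∈ dyadicCell T (n + 1) (2 * j)) : haarFn T n j t = 1 := by
  rw [dyadicCell_two_mul, Set.mem_Ico, div_le_iff₀ (by positivity),
    lt_div_iff₀ (by positivity), pow_succ] at ht
  exact if_pos ⟨by linarith, by linarith⟩

lemma haarFn_of_mem_right (ht : t ∈ dyadicCell T (n + 1) (2 * j + 1)) :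
    haarFn T n j t = -1 := by
  rw [dyadicCell_two_mul_add_one, Set.mem_Ico, div_le_iff₀ (by positivity),
    lt_div_iff₀ (by positivity), pow_succ] at ht
  rw [haarFn, haarMother, if_neg (fun h => by linarith), if_pos ⟨by linarith, by linarith⟩]

lemma haarFn_of_notMem (hT : 0 ≤ T) (ht : t ∉ dyadicCell T n j) : haarFn T n j t = 0 := by
  rw [dyadicCell, Set.mem_Ico, div_le_iff₀ (by positivity), lt_div_iff₀ (by positivity)] at ht
  rw [haarFn, haarMother, if_neg, if_neg] <;>
    exact fun h => ht ⟨by linarith [hT], by linarith [hT]⟩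

lemma haarFn_eq_indicator_sub_indicator (hT : 0 ≤ T) (n j : ℕ) :
    haarFn T n j = (dyadicCell T (n + 1) (2 * j)).indicator 1 -
      (dyadicCell T (n + 1) (2 * j + 1)).indicator 1 := by
  have halves_disjoint := pairwise_disjoint_dyadicCell hT (n + 1) (2 * j).succ_ne_self.symm
  ext t
  by_cases left : t ∈ dyadicCell T (n + 1) (2 * j)
  · simp [haarFn_of_mem_left left, left, halves_disjoint.notMem_of_mem_left left]
  by_cases right : t ∈ dyadicCell T (n + 1) (2 * j + 1)
  · simp [haarFn_of_mem_right right, left, right]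
  have outside : t ∉ dyadicCell T n j := by
    rw [← dyadicCell_two_mul_union hT]
    exact not_or.2 ⟨left, right⟩
  simp [haarFn_of_notMem hT outside, left, right]

end HaarFn

section HaarPartialSum

variable {T : ℝ} {g : ℝ → ℝ}

lemma integral_mul_haarFn (hT : 0 ≤ T) (hg : IntegrableOn g (Set.Ico 0 T)) {n j : ℕ}
    (hj : j < 2 ^ n) :
    ∫ s in (0:ℝ)..T, g s * haarFn T n j s =
      (∫ s in dyadicCell T (n + 1) (2 * j), g s) -
        ∫ s in dyadicCell T (n + 1) (2 * j + 1), g s := by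
  have mul_haarFn_eq (s : ℝ) : g s * haarFn T n j s =
      (dyadicCell T (n + 1) (2 * j)).indicator g s -
        (dyadicCell T (n + 1) (2 * j + 1)).indicator g s := by
    simp [haarFn_eq_indicator_sub_indicator hT, mul_sub, Set.indicator]
  simp_rw [mul_haarFn_eq]
  rw [intervalIntegral.integral_of_le hT, ← integral_Ico_eq_integral_Ioc,
    integral_sub (hg.indicator (measurableSet_dyadicCell ..))
      (hg.indicator (measurableSet_dyadicCell ..)),
    setIntegral_indicator (measurableSet_dyadicCell ..),
    setIntegral_indicator (measurableSet_dyadicCell ..),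
    Set.inter_eq_right.2 (dyadicCell_subset_Ico hT (by omega)),
    Set.inter_eq_right.2 (dyadicCell_subset_Ico hT (by omega))]

lemma setIntegral_dyadicCell_eq_add (hT : 0 ≤ T) (hg : IntegrableOn g (Set.Ico 0 T)) {n j : ℕ}
    (hj : j < 2 ^ n) :
    ∫ s in dyadicCell T n j, g s =
      (∫ s in dyadicCell T (n + 1) (2 * j), g s) +
        ∫ s in dyadicCell T (n + 1) (2 * j + 1), g s := by
  rw [← dyadicCell_two_mul_union hT]
  exact setIntegral_union
    (pairwise_disjoint_dyadicCell hT (n + 1) (2 * j).succ_ne_self.symm)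
    (measurableSet_dyadicCell ..)
    (hg.mono_set (dyadicCell_subset_Ico hT (by omega)))
    (hg.mono_set (dyadicCell_subset_Ico hT (by omega)))

lemma haarPartialSum_succ_of_mem (hT : 0 ≤ T) {n j : ℕ} (hj : j < 2 ^ n) {t : ℝ}
    (ht : t ∈ dyadicCell T n j) :
    haarPartialSum T (n + 1) g t = haarPartialSum T n g t +
      (2 ^ n / T) * (∫ s in (0:ℝ)..T, g s * haarFn T n j s) * haarFn T n j t := by
  rw [haarPartialSum, haarPartialSum, Finset.sum_range_succ, ← add_assoc,
    Finset.sum_eq_single_of_mem j (Finset.mem_range.2 hj)]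
  intro i _ hij
  have notMem : t ∉ dyadicCell T n i :=
    (pairwise_disjoint_dyadicCell hT n hij).notMem_of_mem_right ht
  rw [haarFn_of_notMem hT notMem, mul_zero]

theorem haarPartialSum_eq_setAverage (hT : 0 ≤ T) (hg : IntegrableOn g (Set.Ico 0 T)) {n m : ℕ}
    (hm : m < 2 ^ n) {t : ℝ} (ht : t ∈ dyadicCell T n m) :
    haarPartialSum T n g t = ⨍ s in dyadicCell T n m, g s := by
  induction n generalizing m with
  | zero =>
    obtain rfl : m = 0 := by simpa using hm
    rw [setAverage_dyadicCell hT, dyadicCell_zero_zero, integral_Ico_eq_integral_Ioc,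
      ← intervalIntegral.integral_of_le hT]
    simp [haarPartialSum]
  | succ n ih =>
    obtain ⟨j, hmj⟩ := m.even_or_odd'
    have hj : j < 2 ^ n := by omega
    have mem_parent : t ∈ dyadicCell T n j := by
      rw [← dyadicCell_two_mul_union hT]
      rcases hmj with rfl | rfl
      exacts [Or.inl ht, Or.inr ht]
    rw [haarPartialSum_succ_of_mem hT hj mem_parent, ih hj mem_parent,
      setAverage_dyadicCell hT, setAverage_dyadicCell hT,
      setIntegral_dyadicCell_eq_add hT hg hj, integral_mul_haarFn hT hg hj]
    rcases hmj with rfl | rfl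
    · rw [haarFn_of_mem_left ht]
      ring
    · rw [haarFn_of_mem_right ht]
      ring

end HaarPartialSum

lemma eval_average {α ι : Type*} [Fintype ι] {E : ι → Type*} [∀ i, NormedAddCommGroup (E i)]
    [∀ i, NormedSpace ℝ (E i)] [∀ i, CompleteSpace (E i)] [MeasurableSpace α] {μ : Measure α}
    {f : α → Π i, E i} (hf : ∀ i, Integrable (fun x => f x i) μ) (i : ι) :
    (⨍ x, f x ∂μ) i = ⨍ x, f x i ∂μ := by
  rw [average_eq, average_eq, Pi.smul_apply, eval_integral hf]

lemma mem_stdSimplex_iff_sum_eq_one_and_mem_Icc {𝕜 ι : Type*} [Semiring 𝕜] [PartialOrder 𝕜]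
    [IsOrderedAddMonoid 𝕜] [Fintype ι] {x : ι → 𝕜} :
    x ∈ stdSimplex 𝕜 ι ↔ ∑ i, x i = 1 ∧ ∀ i, x i ∈ Set.Icc (0 : 𝕜) 1 :=
  ⟨fun hx => ⟨hx.2, mem_Icc_of_mem_stdSimplex hx⟩, fun hx => ⟨fun i => (hx.2 i).1, hx.1⟩⟩

theorem stmt8_general {ι : Type*} [Finite ι] {C : Set (ι → ℝ)} (hC : Convex ℝ C)
    (hC_closed : IsClosed C) {T : ℝ} (N : ℕ) {ω : ℝ → ι → ℝ}
    (hint : ∀ i, IntegrableOn (fun t => ω t i) (Set.Ico 0 T))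
    (hω : ∀ᵐ t ∂(volume.restrict (Set.Ico 0 T)), ω t ∈ C) {t : ℝ} (ht : t ∈ Set.Ico 0 T) :
    (fun i => haarOp T N (fun s => ω s i) t) ∈ C := by
  cases nonempty_fintype ι
  have T_pos : 0 < T := ht.1.trans_lt ht.2
  obtain ⟨m, hm, htm⟩ := exists_mem_dyadicCell ht (N + 1)
  have cell_subset := dyadicCell_subset_Ico T_pos.le hm
  have hint_cell (i : ι) : IntegrableOn (fun s => ω s i) (dyadicCell T (N + 1) m) :=
    (hint i).mono_set cell_subset
  have haarOp_eq_average :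
      (fun i => haarOp T N (fun s => ω s i) t) = ⨍ s in dyadicCell T (N + 1) m, ω s := by
    ext i
    rw [eval_average hint_cell]
    exact haarPartialSum_eq_setAverage T_pos.le (hint i) hm htm
  have volume_ne_zero : volume (dyadicCell T (N + 1) m) ≠ 0 := by
    simpa [volume_dyadicCell] using T_pos
  have volume_ne_top : volume (dyadicCell T (N + 1) m) ≠ ⊤ := by
    simp [volume_dyadicCell]
  rw [haarOp_eq_average]
  exact hC.set_average_mem hC_closed volume_ne_zero volume_ne_top
    (ae_restrict_of_ae_restrict_of_subset cell_subset hω) (Integrable.of_eval hint_cell)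

/-- If `ω : [0,T] → ℝ^M` is integrable and takes values in the simplex
`Σ_r^M` almost everywhere, then the coordinatewise Haar wavelet approximation
`F_N(ω)` also takes values in `Σ_r^M` almost everywhere on `[0,T]`. -/
theorem stmt8 (M : ℕ) (hM : 0 < M) (T : ℝ) (hT : 0 < T) (N : ℕ)
    (ω : ℝ → Fin M → ℝ)
    (hint : ∀ i : Fin M, IntegrableOn (fun t => ω t i) (Set.Icc 0 T))
    (hω : ∀ᵐ t ∂(volume.restrict (Set.Icc (0:ℝ) T)),
      ∑ i, ω t i = 1 ∧ ∀ i, ω t i ∈ Set.Icc (0:ℝ) 1) :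
    ∀ᵐ t ∂(volume.restrict (Set.Icc (0:ℝ) T)),
      (∑ i, haarOp T N (fun s => ω s i) t) = 1 ∧
      ∀ i, haarOp T N (fun s => ω s i) t ∈ Set.Icc (0:ℝ) 1 := by
  simp only [← mem_stdSimplex_iff_sum_eq_one_and_mem_Icc, ← restrict_Ico_eq_restrict_Icc] at hω ⊢
  exact (ae_restrict_mem measurableSet_Ico).mono fun t => stmt8_general (convex_stdSimplex ℝ _)
    (isClosed_stdSimplex ℝ _) N (fun i => (hint i).mono_set Set.Ico_subset_Icc_self) hω
end
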